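/- arXiv:1211.5999 — 5 statements merged into one kernel-verified Lean document; each statement's English description precedes it below -/
import Mathlib

section
/- Let (A,s) be a symmetric k-algebra, P a finitely generated projective A-module and V a finitely generated A-module. There is a unique k-bilinear form B_{V,P} : Hom_A(V,P) × Hom_A(P,V) → k such that B_{V,P}(β, λ_{α,v}) = s(α(β(v))) for all A-module homomorphisms β : V → P, α : P → A and all v in V. Moreover B_{V,P} is nondegenerate in both variables; equivalently, the k-linear map Hom_A(V,P) → (Hom_A(P,V))^∨ sending β to B_{V,P}(β, −) is bijective, where (−)^∨ denotes the k-linear dual. -/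
/-!
Choose a finite dual basis `(p i, α i)` of `P`, so that `x = ∑ i, α i x • p i`. Then every
`φ : P → V` equals `∑ i, λ_{α i, φ (p i)}`, which gives uniqueness, and the form is
`B β φ = ∑ i, s (α i (β (φ (p i))))`; the trace property of `s` yields the required formula on
the maps `λ_{α,v}`.

Injectivity of `β ↦ B β` follows from nondegeneracy of `s` and the fact that functionals
`P → A` separate points. For surjectivity, finite-dimensionality of `A` makes `a ↦ s (- * a)` an
isomorphism `A ≃ A^∨`; a functional `f` on `Hom_A(P,V)` therefore determines `A`-linear maps
`γ i : V → A` with `s (b * γ i v) = f λ_{α i, b v}`, and `β v = ∑ i, γ i v • p i` represents `f`.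
Nondegeneracy in the second variable follows since linear functionals over a field separate points.
-/

universe u v w

/-- The map `λ_{α,v} : P → V`, `x ↦ α(x) • v`. -/
def lambdaMap {A : Type u} [Ring A] {P : Type v} {V : Type w}
    [AddCommGroup P] [Module A P] [AddCommGroup V] [Module A V]
    (α : P →ₗ[A] A) (v : V) : P →ₗ[A] V where
  toFun x := α x • v
  map_add' x y := by simp [add_smul]
  map_smul' a x := by simp [mul_smul]

lemma exists_finite_dual_basis (A : Type*) [Ring A] (P : Type*) [AddCommGroup P] [Module A P]
    [Module.Finite A P] [Module.Projective A P] :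
    ∃ (n : ℕ) (p : Fin n → P) (α : Fin n → (P →ₗ[A] A)), ∀ x, ∑ i, α i x • p i = x := by
  obtain ⟨n, f, g, -, -, h⟩ := Module.Finite.exists_comp_eq_id_of_projective A P
  refine ⟨n, fun i => f (Pi.single i 1), fun i => LinearMap.proj i ∘ₗ g, fun x => ?_⟩
  have h1 := LinearMap.congr_fun h x
  simp only [LinearMap.comp_apply, LinearMap.id_apply] at h1
  conv_rhs => rw [← h1, pi_eq_sum_univ' (g x), map_sum]
  refine Finset.sum_congr rfl fun i _ => ?_
  simp only [LinearMap.comp_apply, LinearMap.proj_apply, ← map_smul]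

section SymmetrisingForm

variable {k : Type*} [Field k] {A : Type*} [Ring A] [Algebra k A]

/-- A symmetrising form separates the elements of `A` by left multiplications. -/
lemma symm_form_ext (s : A →ₗ[k] k) (hs : ∀ a b : A, s (a * b) = s (b * a))
    (hnd : ∀ a : A, (∀ b : A, s (a * b) = 0) → a = 0) {a c : A}
    (h : ∀ b, s (b * a) = s (b * c)) : a = c := by
  refine sub_eq_zero.1 (hnd _ fun b => ?_)
  rw [hs, mul_sub, map_sub, h, sub_self]

/-- The map `A → A^∨`, `a ↦ s (- * a)`, is injective, hence surjective by dimension count. -/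
lemma exists_symm_form_repr [FiniteDimensional k A] (s : A →ₗ[k] k)
    (hs : ∀ a b : A, s (a * b) = s (b * a))
    (hnd : ∀ a : A, (∀ b : A, s (a * b) = 0) → a = 0) (g : A →ₗ[k] k) :
    ∃ a : A, ∀ b, s (b * a) = g b := by
  let T : A →ₗ[k] Module.Dual k A := (LinearMap.mul k A).flip.compr₂ s
  have hT : Function.Injective T := fun a c h =>
    symm_form_ext s hs hnd fun b => LinearMap.congr_fun h b
  obtain ⟨a, ha⟩ := (LinearMap.injective_iff_surjective_of_finrank_eq_finrank
    (Subspace.dual_finrank_eq (K := k) (V := A)).symm).1 hT g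
  exact ⟨a, fun b => LinearMap.congr_fun ha b⟩

/-- A `k`-linear functional on an `A`-module is `s` composed with an `A`-linear map to `A`:
`γ v` is the element of `A` representing the functional `b ↦ f (b • v)`. -/
lemma exists_linearMap_repr [FiniteDimensional k A] (s : A →ₗ[k] k)
    (hs : ∀ a b : A, s (a * b) = s (b * a))
    (hnd : ∀ a : A, (∀ b : A, s (a * b) = 0) → a = 0)
    {V : Type*} [AddCommGroup V] [Module k V] [Module A V] [IsScalarTower k A V]
    (f : V →ₗ[k] k) : ∃ γ : V →ₗ[A] A, ∀ v, s (γ v) = f v := by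
  choose γ hγ using fun v : V => exists_symm_form_repr s hs hnd
    (f ∘ₗ (LinearMap.toSpanSingleton A V v).restrictScalars k)
  simp only [LinearMap.comp_apply, LinearMap.coe_restrictScalars,
    LinearMap.toSpanSingleton_apply] at hγ
  refine ⟨⟨⟨γ, fun v w => symm_form_ext s hs hnd fun b => ?_⟩,
    fun a v => symm_form_ext s hs hnd fun b => ?_⟩, fun v => ?_⟩
  · rw [mul_add, map_add, hγ, hγ, hγ, smul_add, map_add]
  · rw [RingHom.id_apply, smul_eq_mul, ← mul_assoc, hγ, hγ, mul_smul]
  · simpa using hγ v 1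

end SymmetrisingForm

/-- For a symmetric `k`-algebra `(A,s)`, a finitely generated projective
`A`-module `P` and a finitely generated `A`-module `V`, there is a unique `k`-bilinear form
`B : Hom_A(V,P) × Hom_A(P,V) → k` with `B(β, λ_{α,v}) = s(α(β(v)))`, and it is
nondegenerate in both variables: the induced map `Hom_A(V,P) → Hom_A(P,V)^∨` is bijective. -/
theorem exists_unique_nondeg_bilinear_form
    (k : Type*) [Field k] (A : Type*) [Ring A] [Algebra k A] [FiniteDimensional k A]
    (s : A →ₗ[k] k)
    (hs : ∀ a b : A, s (a * b) = s (b * a))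
    (hnd : ∀ a : A, (∀ b : A, s (a * b) = 0) → a = 0)
    (P : Type*) [AddCommGroup P] [Module k P] [Module A P] [IsScalarTower k A P]
    [Module.Finite A P] [Module.Projective A P]
    (V : Type*) [AddCommGroup V] [Module k V] [Module A V] [IsScalarTower k A V]
    [Module.Finite A V] :
    ∃ B : (V →ₗ[A] P) →ₗ[k] (P →ₗ[A] V) →ₗ[k] k,
      (∀ (β : V →ₗ[A] P) (α : P →ₗ[A] A) (v : V), B β (lambdaMap α v) = s (α (β v))) ∧
      (∀ B' : (V →ₗ[A] P) →ₗ[k] (P →ₗ[A] V) →ₗ[k] k,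
        (∀ (β : V →ₗ[A] P) (α : P →ₗ[A] A) (v : V),
          B' β (lambdaMap α v) = s (α (β v))) → B' = B) ∧
      Function.Bijective (fun β : V →ₗ[A] P => B β) ∧
      (∀ φ : P →ₗ[A] V, (∀ β : V →ₗ[A] P, B β φ = 0) → φ = 0) := by
  obtain ⟨n, p, α, hα⟩ := exists_finite_dual_basis A P
  have hdecomp : ∀ φ : P →ₗ[A] V, ∑ i, lambdaMap (α i) (φ (p i)) = φ := fun φ => by
    ext x
    conv_rhs => rw [← hα x, map_sum]
    simp [LinearMap.sum_apply, lambdaMap]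
  have hext : ∀ f g : (P →ₗ[A] V) →ₗ[k] k,
      (∀ (α : P →ₗ[A] A) (v : V), f (lambdaMap α v) = g (lambdaMap α v)) → f = g := fun f g h => by
    ext φ
    rw [← hdecomp φ, map_sum, map_sum]
    exact Finset.sum_congr rfl fun i _ => h _ _
  let B : (V →ₗ[A] P) →ₗ[k] (P →ₗ[A] V) →ₗ[k] k :=
    LinearMap.mk₂ k (fun β φ => ∑ i, s (α i (β (φ (p i)))))
      (fun β β' φ => by simp [Finset.sum_add_distrib])
      (fun c β φ => by simp [Finset.mul_sum, LinearMap.map_smul_of_tower])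
      (fun β φ φ' => by simp [Finset.sum_add_distrib])
      (fun c β φ => by simp [Finset.mul_sum, LinearMap.map_smul_of_tower])
  have hB : ∀ (β : V →ₗ[A] P) (α : P →ₗ[A] A) (v : V),
      B β (lambdaMap α v) = s (α (β v)) := fun β a v => by
    conv_rhs => rw [← hα (β v), map_sum, map_sum]
    change ∑ i, s (α i (β (lambdaMap a v (p i)))) = _
    refine Finset.sum_congr rfl fun i _ => ?_
    simp only [lambdaMap, LinearMap.coe_mk, AddHom.coe_mk, map_smul, smul_eq_mul]
    exact hs _ _
  have hsurj : Function.Surjective (fun β : V →ₗ[A] P => B β) := fun f => by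
    let L : Fin n → V →ₗ[k] (P →ₗ[A] V) := fun i =>
      { toFun := fun v => lambdaMap (α i) v
        map_add' := fun v w => by ext x; simp [lambdaMap]
        map_smul' := fun c v => by ext x; exact smul_comm (α i x) c v }
    choose γ hγ using fun i => exists_linearMap_repr s hs hnd (f ∘ₗ L i)
    refine ⟨∑ i, (γ i).smulRight (p i), hext _ _ fun a v => ?_⟩
    have hL : lambdaMap a v = ∑ i, L i (a (p i) • v) := (hdecomp (lambdaMap a v)).symm
    rw [hB, hL, map_sum, LinearMap.sum_apply, map_sum, map_sum]
    refine Finset.sum_congr rfl fun i _ => ?_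
    rw [LinearMap.smulRight_apply, map_smul, smul_eq_mul, hs, ← smul_eq_mul, ← map_smul, hγ]
    rfl
  refine ⟨B, hB, fun B' hB' => ?_, ⟨fun β β' h => ?_, hsurj⟩, fun φ hφ => ?_⟩
  · refine LinearMap.ext fun β => hext _ _ fun a v => ?_
    rw [hB, hB']
  · ext v
    rw [← hα (β v), ← hα (β' v)]
    refine Finset.sum_congr rfl fun i _ => congrArg (· • p i) ?_
    refine symm_form_ext s hs hnd fun b => ?_
    have h1 := LinearMap.congr_fun h (lambdaMap (α i) (b • v))
    simpa only [hB, map_smul, smul_eq_mul] using h1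
  · refine (Module.forall_dual_apply_eq_zero_iff k φ).1 fun f => ?_
    obtain ⟨β, rfl⟩ := hsurj f
    exact hφ β
end

section
/- Let (A,s) be a symmetric k-algebra and let P and Q be finitely generated projective A-modules. Then for all A-module homomorphisms β : Q → P and φ : P → Q one has B_{Q,P}(β, φ) = B_{P,Q}(φ, β). Equivalently, the composition of the isomorphism Hom_A(P,Q) ≅ (Hom_A(Q,P))^∨ induced by B_{P,Q} with the k-linear dual of the isomorphism Hom_A(Q,P) ≅ (Hom_A(P,Q))^∨ induced by B_{Q,P} is the canonical double-duality map Hom_A(P,Q) → (Hom_A(P,Q))^{∨∨}. -/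
/-!
A finitely generated projective module has a finite dual basis: elements `p i` and functionals
`α i` with `x = ∑ i, α i x • p i`. Hence every `φ : P → Q` is `∑ i, λ_{α i, φ (p i)}`, and the
characterising property gives `B_{Q,P}(β, φ) = ∑ i, s (α i (β (φ (p i))))`. Expanding `φ (p i)` in
a dual basis `(q j, γ j)` of `Q` turns this into `∑ i j, s (γ j (φ (p i)) * α i (β (q j)))`.
The same computation for `B_{P,Q}(φ, β)` gives the double sum with the two factors exchanged, and
`s` is a trace form.
-/

universe u v w

/-- The dual basis lemma for finitely generated projective modules. -/
theorem exists_finite_dualBasis (A : Type*) [Ring A] (P : Type*) [AddCommGroup P] [Module A P]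
    [Module.Finite A P] [Module.Projective A P] :
    ∃ (n : ℕ) (p : Fin n → P) (α : Fin n → (P →ₗ[A] A)), ∀ x, x = ∑ i, α i x • p i := by
  obtain ⟨n, f, hf⟩ := Module.Finite.exists_fin' A P
  obtain ⟨g, hg⟩ := Module.projective_lifting_property f LinearMap.id hf
  refine ⟨n, fun i => f (Pi.single i 1), fun i => LinearMap.proj i ∘ₗ g, fun x => ?_⟩
  have h : f (g x) = x := LinearMap.congr_fun hg x
  conv_lhs => rw [← h, pi_eq_sum_univ' (g x)]
  simp only [map_sum, map_smul, LinearMap.comp_apply, LinearMap.proj_apply]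

theorem eq_sum_lambdaMap {A : Type*} [Ring A] {P V : Type*} [AddCommGroup P] [Module A P]
    [AddCommGroup V] [Module A V] {n : ℕ} {p : Fin n → P} {α : Fin n → (P →ₗ[A] A)}
    (h : ∀ x, x = ∑ i, α i x • p i) (φ : P →ₗ[A] V) :
    φ = ∑ i, lambdaMap (α i) (φ (p i)) := by
  ext x
  conv_lhs => rw [h x]
  simp [lambdaMap, LinearMap.sum_apply]

/-- For a symmetric `k`-algebra `(A,s)` and finitely generated projective
`A`-modules `P`, `Q`, the bilinear forms `B_{Q,P}` and `B_{P,Q}` (characterised by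
`B(β, λ_{α,v}) = s(α(β(v)))`) satisfy `B_{Q,P}(β, φ) = B_{P,Q}(φ, β)`; equivalently, the
composition of the two induced duality isomorphisms is the canonical double-duality map. -/
theorem bilinear_form_symm
    (k : Type*) [Field k] (A : Type*) [Ring A] [Algebra k A] [FiniteDimensional k A]
    (s : A →ₗ[k] k)
    (hs : ∀ a b : A, s (a * b) = s (b * a))
    (hnd : ∀ a : A, (∀ b : A, s (a * b) = 0) → a = 0)
    (P : Type*) [AddCommGroup P] [Module k P] [Module A P] [IsScalarTower k A P]
    [Module.Finite A P] [Module.Projective A P]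
    (Q : Type*) [AddCommGroup Q] [Module k Q] [Module A Q] [IsScalarTower k A Q]
    [Module.Finite A Q] [Module.Projective A Q]
    (BQP : (Q →ₗ[A] P) →ₗ[k] (P →ₗ[A] Q) →ₗ[k] k)
    (hBQP : ∀ (β : Q →ₗ[A] P) (α : P →ₗ[A] A) (v : Q),
      BQP β (lambdaMap α v) = s (α (β v)))
    (BPQ : (P →ₗ[A] Q) →ₗ[k] (Q →ₗ[A] P) →ₗ[k] k)
    (hBPQ : ∀ (β : P →ₗ[A] Q) (α : Q →ₗ[A] A) (v : P),
      BPQ β (lambdaMap α v) = s (α (β v))) :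
    ∀ (β : Q →ₗ[A] P) (φ : P →ₗ[A] Q), BQP β φ = BPQ φ β := by
  intro β φ
  obtain ⟨n, p, α, hp⟩ := exists_finite_dualBasis A P
  obtain ⟨m, q, γ, hq⟩ := exists_finite_dualBasis A Q
  have h1 : BQP β φ = ∑ i, ∑ j, s (γ j (φ (p i)) * α i (β (q j))) := by
    conv_lhs => rw [eq_sum_lambdaMap hp φ, map_sum]
    refine Finset.sum_congr rfl fun i _ => ?_
    rw [hBQP]
    conv_lhs => rw [hq (φ (p i))]
    simp
  have h2 : BPQ φ β = ∑ j, ∑ i, s (α i (β (q j)) * γ j (φ (p i))) := by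
    conv_lhs => rw [eq_sum_lambdaMap hq β, map_sum]
    refine Finset.sum_congr rfl fun j _ => ?_
    rw [hBPQ]
    conv_lhs => rw [hp (β (q j))]
    simp
  rw [h1, h2, Finset.sum_comm]
  exact Finset.sum_congr rfl fun j _ => Finset.sum_congr rfl fun i _ => hs _ _
end

section
/- (Tate duality for symmetric algebras.) Let (A,s) be a symmetric k-algebra, U and V finitely generated A-modules, and π : P₀ → U a surjective A-module homomorphism with P₀ finitely generated projective; set Ω(U) = ker(π). Then: (a) for every A-module homomorphism β : V → Ω(U), the functional T(β) vanishes on Hom^{pr}_A(U,V); (b) T(β) = 0 if and only if β factors through a projective A-module; (c) every k-linear functional on Hom_A(U,V) vanishing on Hom^{pr}_A(U,V) is of the form T(β) for some β : V → Ω(U). Consequently T induces a k-linear isomorphism \underline{Hom}_A(V, Ω(U)) ≅ (\underline{Hom}_A(U,V))^∨. -/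
/-!
The argument rests on one representability fact (`exists_representing_hom`): if `P` is finitely
generated projective, every functional `F` on `Hom_A(P, V)` satisfies `F(λ_{α,v}) = s(α(β(v)))` for
some `A`-linear `β : V → P`. As the maps `λ_{α,v}` span `Hom_A(P, V)` (`exists_eq_sum_lambdaMap`),
this says that `F = B_{V,P}(β, -)`.

* Homomorphisms factoring through a projective are finite sums of maps `λ_{γ,w}`. For
  `ψ = λ_{γ,w}` one gets `T(β)(ψ) = s(γ(π(β(w)))) = 0`, which is (a); for `β = λ_{γ,q}` with
  `q ∈ Ω(U)`, symmetry of `s` and a dual basis of `P₀` give `T(β)(ψ) = s(γ(ψ(π(q)))) = 0`.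
* If `T(β) = 0`, choose a surjection `ρ : Aⁿ → Ω(U)`. The functional `B(ι ∘ β, -)` kills every `φ`
  with `φ ∘ ι ∘ ρ = 0`, since such a `φ` factors through `π`; hence it is induced along `ι ∘ ρ` from
  a functional on `Hom_A(Aⁿ, V)`. Representing the latter by `δ : V → Aⁿ` yields `β = ρ ∘ δ`.
* For (c), extend the functional along the injection `ψ ↦ ψ ∘ π` to `Hom_A(P₀, V)` and represent
  the extension by `β' : V → P₀`. Vanishing on the maps `λ_{γ,v}` with `γ : U → A` shows that every
  `γ` kills `π(β'(v))`, and homomorphisms to `A` separate the points of `U`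
  (`eq_zero_of_forall_hom_eq_zero`), so `β'` takes values in `Ω(U)`.
-/

universe u v w

/-- An `A`-module homomorphism factors through a projective `A`-module. -/
def FactorsThroughProjective (A : Type u) [Ring A] {U : Type v} {V : Type w}
    [AddCommGroup U] [Module A U] [AddCommGroup V] [Module A V]
    (f : U →ₗ[A] V) : Prop :=
  ∃ (Q : Type (max u v w)) (_ : AddCommGroup Q) (_ : Module A Q),
    Module.Projective A Q ∧ ∃ (g : U →ₗ[A] Q) (h : Q →ₗ[A] V), h.comp g = f

section Helpers

variable {A : Type*} [Ring A]

@[simp] lemma lambdaMap_apply {P V : Type*} [AddCommGroup P] [Module A P] [AddCommGroup V]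
    [Module A V] (α : P →ₗ[A] A) (v : V) (x : P) : lambdaMap α v x = α x • v := rfl

/-- A map that factors through a projective module is a finite sum of maps `λ_{γ,w}`: lift
`Q → V` along a surjection `Aⁿ → V` and take coordinates. -/
lemma exists_eq_sum_lambdaMap {U Q V : Type*} [AddCommGroup U] [Module A U]
    [AddCommGroup Q] [Module A Q] [AddCommGroup V] [Module A V] [Module.Finite A V]
    [Module.Projective A Q] (g : U →ₗ[A] Q) (h : Q →ₗ[A] V) :
    ∃ (n : ℕ) (γ : Fin n → (U →ₗ[A] A)) (w : Fin n → V),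
      h.comp g = ∑ i, lambdaMap (γ i) (w i) := by
  obtain ⟨n, e, he⟩ := Module.Finite.exists_fin' A V
  obtain ⟨h', hh'⟩ := Module.projective_lifting_property e h he
  refine ⟨n, fun i => (LinearMap.proj i).comp (h'.comp g), fun i => e (Pi.single i 1), ?_⟩
  ext x
  have hx : h (g x) = e (h' (g x)) := by rw [← hh']; rfl
  simp only [LinearMap.comp_apply, LinearMap.sum_apply, lambdaMap_apply, LinearMap.proj_apply, hx]
  conv_lhs => rw [LinearMap.pi_apply_eq_sum_univ e]
  refine Finset.sum_congr rfl fun i _ => ?_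
  congr 2
  ext j
  simp [Pi.single_apply, eq_comm]

lemma FactorsThroughProjective.exists_eq_sum {U V : Type*} [AddCommGroup U] [Module A U]
    [AddCommGroup V] [Module A V] [Module.Finite A V] {f : U →ₗ[A] V}
    (hf : FactorsThroughProjective A f) :
    ∃ (n : ℕ) (γ : Fin n → (U →ₗ[A] A)) (w : Fin n → V), f = ∑ i, lambdaMap (γ i) (w i) := by
  obtain ⟨Q, _, _, _, g, h, rfl⟩ := hf
  exact exists_eq_sum_lambdaMap g h

/-- A composite through a projective module living in the universe of `A` factors through a
projective module of the universe demanded by `FactorsThroughProjective`. -/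
lemma factorsThroughProjective_comp {A : Type u} [Ring A] {U : Type v} {V : Type w} {Q : Type u}
    [AddCommGroup U] [Module A U]
    [AddCommGroup V] [Module A V] [AddCommGroup Q] [Module A Q] [Module.Projective A Q]
    (g : U →ₗ[A] Q) (h : Q →ₗ[A] V) : FactorsThroughProjective A (h.comp g) := by
  refine ⟨ULift.{max v w} Q, inferInstance, inferInstance,
    Module.Projective.of_equiv (ULift.moduleEquiv (R := A) (M := Q)).symm,
    (ULift.moduleEquiv (R := A) (M := Q)).symm.toLinearMap.comp g,
    h.comp (ULift.moduleEquiv (R := A) (M := Q)).toLinearMap, ?_⟩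
  ext x
  simp

lemma factorsThroughProjective_lambdaMap {U V : Type*} [AddCommGroup U] [Module A U]
    [AddCommGroup V] [Module A V] (γ : U →ₗ[A] A) (v : V) :
    FactorsThroughProjective A (lambdaMap γ v) :=
  factorsThroughProjective_comp γ (LinearMap.toSpanSingleton A V v)

variable {k : Type*} [Field k] [Algebra k A]

/-- Precomposition with an `A`-linear map, as a `k`-linear map of homomorphism spaces. -/
def precomp (k : Type*) [Field k] [Algebra k A] {P Q : Type*} (V : Type*) [AddCommGroup P]
    [Module A P] [AddCommGroup Q] [Module A Q] [AddCommGroup V] [Module k V] [Module A V]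
    [IsScalarTower k A V] (f : P →ₗ[A] Q) : (Q →ₗ[A] V) →ₗ[k] (P →ₗ[A] V) where
  toFun φ := φ.comp f
  map_add' _ _ := rfl
  map_smul' _ _ := rfl

/-- A functional vanishing on the kernel of a linear map is induced along that map. -/
lemma exists_functional_comp_eq {X Y : Type*} [AddCommGroup X] [Module k X] [AddCommGroup Y]
    [Module k Y] (R : X →ₗ[k] Y) (L : X →ₗ[k] k) (h : ∀ x, R x = 0 → L x = 0) :
    ∃ G : Y →ₗ[k] k, ∀ x, G (R x) = L x := by
  have hL : L ∈ LinearMap.range R.dualMap := by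
    rw [LinearMap.range_dualMap_eq_dualAnnihilator_ker, Submodule.mem_dualAnnihilator]
    exact fun x hx => h x hx
  obtain ⟨G, hG⟩ := hL
  exact ⟨G, fun x => by rw [← hG]; rfl⟩

variable (s : A →ₗ[k] k)

/-- If every `s(α(p))` vanishes then `p = 0`: replacing `α` by its right multiples shows
`α(p) = 0` for all `α`, and the dual of a projective module separates points. -/
lemma eq_zero_of_forall_form_eq_zero (hnd : ∀ a : A, (∀ b : A, s (a * b) = 0) → a = 0)
    {P : Type*} [AddCommGroup P] [Module A P] [Module.Finite A P] [Module.Projective A P] (p : P)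
    (hp : ∀ α : P →ₗ[A] A, s (α p) = 0) : p = 0 := by
  obtain ⟨n, γ, w, h⟩ := exists_eq_sum_lambdaMap (A := A) (LinearMap.id : P →ₗ[A] P) LinearMap.id
  have hp' := LinearMap.congr_fun h p
  simp only [LinearMap.comp_apply, LinearMap.id_apply, LinearMap.sum_apply, lambdaMap_apply] at hp'
  rw [hp']
  refine Finset.sum_eq_zero fun i _ => ?_
  rw [hnd (γ i p) fun b => by simpa using hp (lambdaMap (γ i) b), zero_smul]

variable [FiniteDimensional k A]

/-- By finite-dimensionality, the nondegenerate form `(c, a) ↦ s(ca)` represents every functional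
on `A`. -/
lemma exists_form_eq (hnd : ∀ a : A, (∀ b : A, s (a * b) = 0) → a = 0) (f : A →ₗ[k] k) :
    ∃ c : A, ∀ a, s (c * a) = f a := by
  let Φ : A →ₗ[k] Module.Dual k A := (LinearMap.mul k A).compr₂ s
  have hinj : Function.Injective Φ := by
    rw [injective_iff_map_eq_zero]
    exact fun a ha => hnd a fun b => LinearMap.congr_fun ha b
  have hsurj : Function.Surjective Φ :=
    (LinearMap.injective_iff_surjective_of_finrank_eq_finrank
      Subspace.dual_finrank_eq.symm).1 hinj
  obtain ⟨c, hc⟩ := hsurj f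
  exact ⟨c, fun a => LinearMap.congr_fun hc a⟩

/-- Homomorphisms to a symmetric algebra separate points: a functional `f` on `U` gives the
`A`-linear map `γ : U → A` with `s(aγ(x)) = f(ax)`. -/
lemma eq_zero_of_forall_hom_eq_zero (hs : ∀ a b : A, s (a * b) = s (b * a))
    (hnd : ∀ a : A, (∀ b : A, s (a * b) = 0) → a = 0)
    {U : Type*} [AddCommGroup U] [Module k U] [Module A U] [IsScalarTower k A U] (u : U)
    (hu : ∀ γ : U →ₗ[A] A, γ u = 0) : u = 0 := by
  rw [← Module.forall_dual_apply_eq_zero_iff k u]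
  intro f
  have hf : ∀ x : U, ∃ c : A, ∀ a : A, s (c * a) = f (a • x) := fun x =>
    exists_form_eq s hnd (f.comp ((LinearMap.toSpanSingleton A U x).restrictScalars k))
  choose c hc using hf
  let γ : U →ₗ[A] A :=
    { toFun := c
      map_add' := fun x y => by
        rw [← sub_eq_zero]
        refine hnd _ fun b => ?_
        rw [sub_mul, add_mul, map_sub, map_add, hc, hc, hc, smul_add, map_add, sub_self]
      map_smul' := fun a x => by
        rw [← sub_eq_zero]
        refine hnd _ fun b => ?_
        rw [RingHom.id_apply, smul_eq_mul, sub_mul, map_sub, hc, hs (a * c x) b, ← mul_assoc,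
          hs (b * a) (c x), hc, mul_smul, sub_self] }
  have h0 : c u = 0 := hu γ
  have h1 := hc u 1
  rw [h0, zero_mul, map_zero, one_smul] at h1
  exact h1.symm

/-- Representability of functionals on `Hom_A(P, V)`. With a dual basis `(γᵢ, pᵢ)` of `P`, the
value `β(v)` is `∑ cᵢ pᵢ`, where `s(cᵢ a)` is the value of `F` at `x ↦ γᵢ(x) a v`. -/
lemma exists_representing_hom (hs : ∀ a b : A, s (a * b) = s (b * a))
    (hnd : ∀ a : A, (∀ b : A, s (a * b) = 0) → a = 0)
    {P V : Type*} [AddCommGroup P] [Module A P] [Module.Finite A P]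
    [Module.Projective A P] [AddCommGroup V] [Module k V] [Module A V] [IsScalarTower k A V]
    (F : (P →ₗ[A] V) →ₗ[k] k) :
    ∃ β : V →ₗ[A] P, ∀ (α : P →ₗ[A] A) (v : V), F (lambdaMap α v) = s (α (β v)) := by
  obtain ⟨n, γ, p, h⟩ := exists_eq_sum_lambdaMap (A := A) (LinearMap.id : P →ₗ[A] P) LinearMap.id
  have hid : ∀ x : P, x = ∑ i, γ i x • p i := fun x => by simpa using LinearMap.congr_fun h x
  have hex : ∀ v : V, ∃ q : P, ∀ α : P →ₗ[A] A, F (lambdaMap α v) = s (α q) := by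
    intro v
    let L : Fin n → (A →ₗ[k] (P →ₗ[A] V)) := fun i =>
      { toFun := fun a => lambdaMap (γ i) (a • v)
        map_add' := fun a b => by ext x; simp [add_smul]
        map_smul' := fun r a => by
          ext x
          simp only [lambdaMap_apply, LinearMap.smul_apply, RingHom.id_apply, smul_assoc]
          rw [smul_comm] }
    have hc : ∀ i, ∃ c : A, ∀ a, s (c * a) = F (lambdaMap (γ i) (a • v)) := fun i =>
      exists_form_eq s hnd (F.comp (L i))
    choose c hc using hc
    refine ⟨∑ i, c i • p i, fun α => ?_⟩
    have hα : lambdaMap α v = ∑ i, lambdaMap (γ i) (α (p i) • v) := by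
      ext x
      conv_lhs => rw [hid x]
      simp
    rw [hα]
    simp [hc]
  choose β hβ using hex
  have huniq : ∀ q q' : P, (∀ α : P →ₗ[A] A, s (α q) = s (α q')) → q = q' := fun q q' hq =>
    sub_eq_zero.1 (eq_zero_of_forall_form_eq_zero s hnd _ fun α => by simp [hq α])
  refine ⟨{ toFun := β, map_add' := fun v w => ?_, map_smul' := fun a v => ?_ },
    fun α v => hβ v α⟩
  · refine huniq _ _ fun α => ?_
    have : lambdaMap α (v + w) = lambdaMap α v + lambdaMap α w := by ext x; simp
    rw [← hβ, this, map_add, map_add, map_add, hβ, hβ]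
  · refine huniq _ _ fun α => ?_
    have : lambdaMap α (a • v) = lambdaMap (lambdaMap α a) v := by ext x; simp [mul_smul]
    rw [← hβ, this, hβ, RingHom.id_apply, map_smul, lambdaMap_apply, smul_eq_mul, smul_eq_mul, hs]

end Helpers

/-- Tate duality for symmetric algebras.  With `Ω(U) = ker π` and
`T(β)(ψ) = B_{V,P₀}(ι ∘ β, ψ ∘ π)`: (a) `T(β)` vanishes on homomorphisms factoring through
projectives; (b) `T(β) = 0` iff `β` factors through a projective; (c) every functional on
`Hom_A(U,V)` vanishing on `Hom^{pr}_A(U,V)` has the form `T(β)`. -/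
theorem tate_duality_symmetric_algebra
    (k : Type*) [Field k] (A : Type*) [Ring A] [Algebra k A] [FiniteDimensional k A]
    (s : A →ₗ[k] k)
    (hs : ∀ a b : A, s (a * b) = s (b * a))
    (hnd : ∀ a : A, (∀ b : A, s (a * b) = 0) → a = 0)
    (U V : Type*) [AddCommGroup U] [Module k U] [Module A U] [IsScalarTower k A U]
    [Module.Finite A U]
    [AddCommGroup V] [Module k V] [Module A V] [IsScalarTower k A V]
    [Module.Finite A V]
    (P₀ : Type*) [AddCommGroup P₀] [Module k P₀] [Module A P₀] [IsScalarTower k A P₀]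
    [Module.Finite A P₀] [Module.Projective A P₀]
    (π : P₀ →ₗ[A] U) (hπ : Function.Surjective π)
    (B : (V →ₗ[A] P₀) →ₗ[k] (P₀ →ₗ[A] V) →ₗ[k] k)
    (hB : ∀ (β : V →ₗ[A] P₀) (α : P₀ →ₗ[A] A) (v : V),
      B β (lambdaMap α v) = s (α (β v))) :
    (∀ (β : V →ₗ[A] ↥(LinearMap.ker π)) (ψ : U →ₗ[A] V),
      FactorsThroughProjective A ψ →
      B ((LinearMap.ker π).subtype.comp β) (ψ.comp π) = 0) ∧
    (∀ β : V →ₗ[A] ↥(LinearMap.ker π),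
      (∀ ψ : U →ₗ[A] V, B ((LinearMap.ker π).subtype.comp β) (ψ.comp π) = 0) ↔
      FactorsThroughProjective A β) ∧
    (∀ F : (U →ₗ[A] V) →ₗ[k] k,
      (∀ ψ : U →ₗ[A] V, FactorsThroughProjective A ψ → F ψ = 0) →
      ∃ β : V →ₗ[A] ↥(LinearMap.ker π),
        ∀ ψ : U →ₗ[A] V, F ψ = B ((LinearMap.ker π).subtype.comp β) (ψ.comp π)) := by
  have hnoeth : IsNoetherianRing A := isNoetherian_of_tower k inferInstance
  have hnoethP : IsNoetherian A P₀ := isNoetherian_of_isNoetherianRing_of_finite A P₀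
  have hfinK : Module.Finite A (LinearMap.ker π) := inferInstance
  refine ⟨?_, fun β => ⟨fun hβ => ?_, fun hβ ψ => ?_⟩, fun F hF => ?_⟩
  · intro β ψ hψ
    obtain ⟨n, γ, w, rfl⟩ := hψ.exists_eq_sum
    have hsum : (∑ i, lambdaMap (γ i) (w i)).comp π
        = ∑ i, lambdaMap ((γ i).comp π) (w i) := by
      ext x; simp
    rw [hsum, map_sum]
    refine Finset.sum_eq_zero fun i _ => ?_
    rw [hB]
    simp
  · obtain ⟨n, ρ, hρ⟩ := Module.Finite.exists_fin' A (LinearMap.ker π)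
    obtain ⟨G, hG⟩ := exists_functional_comp_eq
      (precomp k V ((LinearMap.ker π).subtype.comp ρ))
      (B ((LinearMap.ker π).subtype.comp β)) (by
        intro φ hφ
        have hker : LinearMap.ker π ≤ LinearMap.ker φ := by
          intro x hx
          obtain ⟨y, hy⟩ := hρ ⟨x, hx⟩
          have := LinearMap.congr_fun hφ y
          simpa [precomp, hy] using this
        have hφπ : φ = (((LinearMap.ker π).liftQ φ hker).comp
            (π.quotKerEquivOfSurjective hπ).symm.toLinearMap).comp π := by
          ext x
          have : (π.quotKerEquivOfSurjective hπ).symm (π x) = (LinearMap.ker π).mkQ x := by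
            rw [LinearEquiv.symm_apply_eq]; rfl
          simp [this]
        rw [hφπ]
        exact hβ _)
    obtain ⟨δ, hδ⟩ := exists_representing_hom s hs hnd G
    have hβρ : β = ρ.comp δ := by
      ext v
      rw [← sub_eq_zero]
      refine eq_zero_of_forall_form_eq_zero s hnd _ fun α => ?_
      have h1 := hG (lambdaMap α v)
      rw [hB] at h1
      have h2 := hδ (α.comp ((LinearMap.ker π).subtype.comp ρ)) v
      have h3 : G (lambdaMap (α.comp ((LinearMap.ker π).subtype.comp ρ)) v)
        = s (α (β v : P₀)) := h1
      rw [map_sub, map_sub, ← h3, h2]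
      simp
    rw [hβρ]
    exact factorsThroughProjective_comp δ ρ
  · obtain ⟨n, γ, q, rfl⟩ := hβ.exists_eq_sum
    obtain ⟨m, α, p, h⟩ :=
      exists_eq_sum_lambdaMap (A := A) (LinearMap.id : P₀ →ₗ[A] P₀) LinearMap.id
    have hid : ∀ x : P₀, x = ∑ i, α i x • p i := fun x => by simpa using LinearMap.congr_fun h x
    have hψ : ψ.comp π = ∑ i, lambdaMap (α i) (ψ (π (p i))) := by
      ext x
      conv_lhs => rw [hid x]
      simp
    have hsum : (LinearMap.ker π).subtype.comp (∑ j, lambdaMap (γ j) (q j))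
        = ∑ j, lambdaMap (γ j) (q j : P₀) := by
      ext x; simp
    rw [hsum, map_sum, LinearMap.sum_apply]
    refine Finset.sum_eq_zero fun j _ => ?_
    -- the dual basis collapses the sum to `s (γ j (ψ (π (q j))))`, and `q j` lies in `ker π`
    have hq : ∑ i, α i (q j) * γ j (ψ (π (p i))) = 0 := by
      have h0 : γ j (ψ (π (q j : P₀))) = 0 := by simp
      rw [hid (q j : P₀)] at h0
      simpa using h0
    rw [hψ, map_sum]
    simp only [hB, lambdaMap_apply, map_smul, smul_eq_mul]
    rw [Finset.sum_congr rfl fun i _ => hs _ _, ← map_sum, hq, map_zero]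
  · obtain ⟨F', hF'⟩ := exists_functional_comp_eq (precomp k V π) F (by
      intro ψ hψ
      have : ψ = 0 := by
        ext u
        obtain ⟨x, rfl⟩ := hπ u
        exact LinearMap.congr_fun hψ x
      rw [this, map_zero])
    obtain ⟨β', hβ'⟩ := exists_representing_hom s hs hnd F'
    have hker : ∀ v, β' v ∈ LinearMap.ker π := by
      intro v
      refine eq_zero_of_forall_hom_eq_zero s hs hnd _ fun γ => hnd _ fun b => ?_
      have h1 := hβ' ((lambdaMap γ b).comp π) v
      have h2 : F' (lambdaMap ((lambdaMap γ b).comp π) v) = F (lambdaMap (lambdaMap γ b) v) :=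
        hF' (lambdaMap (lambdaMap γ b) v)
      rw [hF _ (factorsThroughProjective_lambdaMap _ _), h1] at h2
      simpa using h2
    refine ⟨β'.codRestrict _ hker, fun ψ => ?_⟩
    obtain ⟨m, α, w, h⟩ := exists_eq_sum_lambdaMap (A := A) (LinearMap.id : P₀ →ₗ[A] P₀) (ψ.comp π)
    rw [LinearMap.comp_id] at h
    have h1 : F' (ψ.comp π) = F ψ := hF' ψ
    rw [← h1, h, map_sum, map_sum]
    refine Finset.sum_congr rfl fun i _ => ?_
    rw [hB, hβ']
    rfl
end

section
/- Let (A,s) be a symmetric k-algebra, U and V finitely generated A-modules, and π : P₀ → U a surjective A-module homomorphism with P₀ finitely generated projective; set Ω(U) = ker(π). Then dim_k \underline{Hom}_A(V, Ω(U)) = dim_k \underline{Hom}_A(U, V). -/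
/-!
For a free module `A ^ n` put `tr φ = ∑ i, s (φ (e i) i)`; symmetry of `s` gives
`tr (u ∘ v) = tr (v ∘ u)`. Since `a ↦ s (- * a)` identifies `A` with its `k`-dual, every `k`-linear
form on a module `V` is `s ∘ g` for an `A`-linear `g : V → A`, and hence `(f, g) ↦ tr (g ∘ f)` is
nondegenerate on `Hom(A ^ n, V) × Hom(V, A ^ n)`. Writing the projective module `P₀` as a direct
summand of some `A ^ n` yields a nondegenerate pairing of `Hom(P₀, V)` and `Hom(V, P₀)`.

Embed `X = Hom(U, V)` in `Hom(P₀, V)` through `π`, and `Y = Hom(V, Ω U)` in `Hom(V, P₀)` through the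
inclusion. Let `X'` and `Y'` be their subspaces of maps which factor through a projective module,
equivalently through a fixed surjection from a free module onto the target. Cyclicity of the trace
and nondegeneracy over that free module show that the orthogonal of `Y'` is `X` and the orthogonal
of `X'` is `Y`. With `N = dim Hom(P₀, V) = dim Hom(V, P₀)` this gives `dim X + dim Y' = N` and
`dim Y + dim X' = N`, so the quotients of `X` by `X'` and of `Y` by `Y'` have the same dimension.
-/

universe u v w

section Trace

variable {k : Type*} [Field k] {A : Type*} [Ring A] [Algebra k A]

/-- The trace form on endomorphisms of the free module `A ^ n` induced by the linear form `s`: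
the sum of the values of `s` on the diagonal entries. -/
def freeTrace (s : A →ₗ[k] k) (n : ℕ) (φ : (Fin n → A) →ₗ[A] (Fin n → A)) : k :=
  ∑ i, s (φ (Pi.single i 1) i)

lemma freeTrace_add (s : A →ₗ[k] k) (n : ℕ) (φ ψ : (Fin n → A) →ₗ[A] (Fin n → A)) :
    freeTrace s n (φ + ψ) = freeTrace s n φ + freeTrace s n ψ := by
  simp [freeTrace, Finset.sum_add_distrib]

lemma freeTrace_smul (s : A →ₗ[k] k) (n : ℕ) (c : k) (φ : (Fin n → A) →ₗ[A] (Fin n → A)) :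
    freeTrace s n (c • φ) = c • freeTrace s n φ := by
  simp [freeTrace, Finset.mul_sum]

lemma freeTrace_comp_comm (s : A →ₗ[k] k) (hs : ∀ a b : A, s (a * b) = s (b * a)) {n m : ℕ}
    (u : (Fin m → A) →ₗ[A] (Fin n → A)) (v : (Fin n → A) →ₗ[A] (Fin m → A)) :
    freeTrace s n (u ∘ₗ v) = freeTrace s m (v ∘ₗ u) := by
  have key : ∀ {p q : ℕ} (w : (Fin p → A) →ₗ[A] (Fin q → A)) (x : Fin p → A) (i : Fin q),
      w x i = ∑ j, x j * w (Pi.single j 1) i := by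
    intro p q w x i
    conv_lhs => rw [← Finset.univ_sum_single x]
    rw [map_sum, Finset.sum_apply]
    refine Finset.sum_congr rfl fun j _ => ?_
    have : (Pi.single j (x j) : Fin p → A) = x j • Pi.single j (1 : A) := by
      rw [← Pi.single_smul]; simp
    rw [this, map_smul]; rfl
  simp only [freeTrace, LinearMap.comp_apply]
  simp_rw [key u (v _), key v (u _), map_sum]
  rw [Finset.sum_comm]
  exact Finset.sum_congr rfl fun j _ => Finset.sum_congr rfl fun i _ => hs _ _

variable {V : Type*} [AddCommGroup V] [Module A V]

lemma freeTrace_nondeg_right (s : A →ₗ[k] k)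
    (hs : ∀ a b : A, s (a * b) = s (b * a))
    (hnd : ∀ a : A, (∀ b : A, s (a * b) = 0) → a = 0) {n : ℕ} (g : V →ₗ[A] (Fin n → A))
    (hg : ∀ f : (Fin n → A) →ₗ[A] V, freeTrace s n (g ∘ₗ f) = 0) : g = 0 := by
  have h0 : ∀ v i, s (g v i) = 0 := by
    intro v i
    have h := hg (LinearMap.toSpanSingleton A V v ∘ₗ LinearMap.proj i)
    rw [freeTrace, Finset.sum_eq_single i] at h
    · simpa using h
    · intro j _ hj
      simp [hj.symm]
    · simp
  ext v i
  refine hnd _ fun b => ?_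
  rw [hs]
  simpa using h0 (b • v) i

variable [Module k V] [IsScalarTower k A V]

/-- Every `k`-linear form on an `A`-module comes from an `A`-linear map to `A` by composing with
the symmetrising form. -/
lemma exists_hom_of_dual [FiniteDimensional k A] (s : A →ₗ[k] k)
    (hs : ∀ a b : A, s (a * b) = s (b * a))
    (hnd : ∀ a : A, (∀ b : A, s (a * b) = 0) → a = 0) (l : V →ₗ[k] k) :
    ∃ g : V →ₗ[A] A, ∀ v, s (g v) = l v := by
  let e : A →ₗ[k] Module.Dual k A :=
    LinearMap.mk₂ k (fun a b => s (b * a)) (by simp [mul_add]) (by simp) (by simp [add_mul])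
      (by simp)
  have he : ∀ a b, e a b = s (b * a) := fun _ _ => rfl
  have hinj : Function.Injective e := by
    rw [injective_iff_map_eq_zero]
    intro a ha
    refine hnd a fun b => ?_
    rw [hs, ← he, ha]; rfl
  have hsurj : Function.Surjective e :=
    (LinearMap.injective_iff_surjective_of_finrank_eq_finrank
      (Subspace.dual_finrank_eq (K := k) (V := A)).symm).1 hinj
  have hex : ∀ v : V, ∃ a : A, ∀ b, s (b * a) = l (b • v) := fun v => by
    obtain ⟨a, ha⟩ := hsurj (l ∘ₗ (LinearMap.toSpanSingleton A V v).restrictScalars k)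
    exact ⟨a, fun b => by rw [← he, ha]; rfl⟩
  choose g hg using hex
  refine ⟨{ toFun := g, map_add' := ?_, map_smul' := ?_ }, fun v => ?_⟩
  · intro x y
    apply hinj
    ext b
    simp [he, hg]
  · intro a x
    apply hinj
    ext b
    simp [he, hg, ← mul_assoc, mul_smul]
  · simpa using hg v 1

lemma freeTrace_nondeg_left [FiniteDimensional k A] (s : A →ₗ[k] k)
    (hs : ∀ a b : A, s (a * b) = s (b * a))
    (hnd : ∀ a : A, (∀ b : A, s (a * b) = 0) → a = 0) {n : ℕ} (f : (Fin n → A) →ₗ[A] V)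
    (hf : ∀ g : V →ₗ[A] (Fin n → A), freeTrace s n (g ∘ₗ f) = 0) : f = 0 := by
  refine LinearMap.pi_ext' fun i => LinearMap.ext_ring ?_
  by_contra hne
  have hne' : f (Pi.single i 1) ≠ 0 := by simpa using hne
  apply hne'
  rw [← Module.forall_dual_apply_eq_zero_iff k]
  intro l
  obtain ⟨g, hg⟩ := exists_hom_of_dual s hs hnd l
  have h := hf (LinearMap.single A (fun _ => A) i ∘ₗ g)
  rw [freeTrace, Finset.sum_eq_single i] at h
  · simpa [hg] using h
  · intro j _ hj
    simp [hj]
  · simp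

end Trace

section Pairing

variable {k : Type*} [Field k]

lemma finrank_ker_add_finrank_of_flip_injective {Z W : Type*} [AddCommGroup Z] [Module k Z]
    [AddCommGroup W] [Module k W] [FiniteDimensional k Z] [FiniteDimensional k W]
    (B : Z →ₗ[k] W →ₗ[k] k) (hB : Function.Injective B.flip) :
    Module.finrank k (LinearMap.ker B) + Module.finrank k W = Module.finrank k Z := by
  have hsurj : Function.Surjective B := LinearMap.flip_injective_iff₁.1 hB
  have h := LinearMap.finrank_range_add_finrank_ker B
  rw [LinearMap.range_eq_top.2 hsurj, finrank_top, Subspace.dual_finrank_eq] at h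
  omega

end Pairing

section Factor

/-- Factoring through some projective module amounts to lifting along any given surjection from a
free module of finite rank; this also removes the universe restriction in the definition. -/
lemma factorsThroughProjective_iff {A : Type u} [Ring A] {U : Type v} {V : Type w}
    [AddCommGroup U] [Module A U] [AddCommGroup V] [Module A V] {m : ℕ}
    (q : (Fin m → A) →ₗ[A] V) (hq : Function.Surjective q) (f : U →ₗ[A] V) :
    FactorsThroughProjective A f ↔ ∃ h : U →ₗ[A] (Fin m → A), q ∘ₗ h = f := by
  constructor
  · rintro ⟨Q, _, _, _, g, h, rfl⟩
    obtain ⟨l, hl⟩ := Module.projective_lifting_property q h hq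
    exact ⟨l ∘ₗ g, by rw [← LinearMap.comp_assoc, hl]⟩
  · rintro ⟨h, rfl⟩
    refine ⟨ULift.{max v w} (Fin m → A), inferInstance, inferInstance,
      Module.Projective.of_equiv (ULift.moduleEquiv (R := A)).symm,
      ULift.moduleEquiv.symm.toLinearMap ∘ₗ h, q ∘ₗ ULift.moduleEquiv.toLinearMap, ?_⟩
    ext x
    simp

lemma finiteDimensional_hom {k : Type*} [Field k] {A : Type*} [Ring A] [Algebra k A]
    [FiniteDimensional k A] (U V : Type*) [AddCommGroup U] [Module k U] [Module A U]
    [IsScalarTower k A U] [Module.Finite A U] [AddCommGroup V] [Module k V] [Module A V]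
    [IsScalarTower k A V] [Module.Finite A V] : FiniteDimensional k (U →ₗ[A] V) := by
  have : FiniteDimensional k U := Module.Finite.trans A U
  have : FiniteDimensional k V := Module.Finite.trans A V
  exact FiniteDimensional.of_injective (LinearMap.restrictScalarsₗ k A U V k)
    (LinearMap.restrictScalars_injective k)

end Factor

/-- `dim_k 𝐻𝑜𝑚̲_A(V, Ω(U)) = dim_k 𝐻𝑜𝑚̲_A(U, V)`, where `Ω(U) = ker π` for a
surjection `π : P₀ → U` with `P₀` finitely generated projective, and the stable `Hom` is
the quotient of `Hom` by the subspace of maps factoring through projective modules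
(realised as the span of that subset, which is already a subspace). -/
theorem rank_stableHom_omega_eq
    (k : Type*) [Field k] (A : Type*) [Ring A] [Algebra k A] [FiniteDimensional k A]
    (s : A →ₗ[k] k)
    (hs : ∀ a b : A, s (a * b) = s (b * a))
    (hnd : ∀ a : A, (∀ b : A, s (a * b) = 0) → a = 0)
    (U V : Type*) [AddCommGroup U] [Module k U] [Module A U] [IsScalarTower k A U]
    [Module.Finite A U]
    [AddCommGroup V] [Module k V] [Module A V] [IsScalarTower k A V]
    [Module.Finite A V]
    (P₀ : Type*) [AddCommGroup P₀] [Module k P₀] [Module A P₀] [IsScalarTower k A P₀]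
    [Module.Finite A P₀] [Module.Projective A P₀]
    (π : P₀ →ₗ[A] U) (hπ : Function.Surjective π) :
    Module.finrank k
      ((V →ₗ[A] ↥(LinearMap.ker π)) ⧸
        Submodule.span k
          {f : V →ₗ[A] ↥(LinearMap.ker π) | FactorsThroughProjective A f})
    = Module.finrank k
      ((U →ₗ[A] V) ⧸
        Submodule.span k {f : U →ₗ[A] V | FactorsThroughProjective A f}) := by
  have : IsNoetherianRing A := isNoetherian_of_tower k inferInstance
  have := finiteDimensional_hom (k := k) (A := A) U V
  have := finiteDimensional_hom (k := k) (A := A) P₀ V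
  have := finiteDimensional_hom (k := k) (A := A) V P₀
  have := finiteDimensional_hom (k := k) (A := A) V (LinearMap.ker π)
  -- `P₀` is a direct summand of `A ^ n`, with inclusion `ι` and projection `ρ`.
  obtain ⟨n, ρ, ι, -, -, hρι⟩ := Module.Finite.exists_comp_eq_id_of_projective A P₀
  have hρι' : ∀ x, ρ (ι x) = x := fun x => LinearMap.congr_fun hρι x
  obtain ⟨m, q, hq⟩ := Module.Finite.exists_fin' A V
  obtain ⟨l, r, hr⟩ := Module.Finite.exists_fin' A (LinearMap.ker π)
  set X' := Submodule.span k {f : U →ₗ[A] V | FactorsThroughProjective A f} with hX'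
  set Y' := Submodule.span k
    {f : V →ₗ[A] ↥(LinearMap.ker π) | FactorsThroughProjective A f} with hY'
  let B : (P₀ →ₗ[A] V) →ₗ[k] (V →ₗ[A] P₀) →ₗ[k] k :=
    LinearMap.mk₂ k (fun f g => freeTrace s n (ι ∘ₗ g ∘ₗ f ∘ₗ ρ))
      (by intros; simp only [LinearMap.add_comp, LinearMap.comp_add, freeTrace_add])
      (by intros; simp only [LinearMap.smul_comp, LinearMap.comp_smul, freeTrace_smul])
      (by intros; simp only [LinearMap.add_comp, LinearMap.comp_add, freeTrace_add])
      (by intros; simp only [LinearMap.smul_comp, LinearMap.comp_smul, freeTrace_smul])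
  -- If one argument factors through a free module, the pairing is a trace over that module.
  have hB₁ : ∀ {p : ℕ} (a : (Fin p → A) →ₗ[A] V) (b : P₀ →ₗ[A] (Fin p → A)) (g : V →ₗ[A] P₀),
      B (a ∘ₗ b) g = freeTrace s p (b ∘ₗ g ∘ₗ a) := by
    intro p a b g
    refine (freeTrace_comp_comm s hs (ι ∘ₗ g ∘ₗ a) (b ∘ₗ ρ)).trans ?_
    congr 1
    refine LinearMap.ext fun x => ?_
    simp [hρι']
  have hB₂ : ∀ {p : ℕ} (f : P₀ →ₗ[A] V) (c : (Fin p → A) →ₗ[A] P₀) (d : V →ₗ[A] (Fin p → A)),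
      B f (c ∘ₗ d) = freeTrace s p (d ∘ₗ f ∘ₗ c) := by
    intro p f c d
    refine (freeTrace_comp_comm s hs (ι ∘ₗ c) (d ∘ₗ f ∘ₗ ρ)).trans ?_
    congr 1
    refine LinearMap.ext fun x => ?_
    simp [hρι']
  have hBl : ∀ f, (∀ g, B f g = 0) → f = 0 := by
    intro f hf
    have h0 : f ∘ₗ ρ = 0 := freeTrace_nondeg_left s hs hnd _ fun g => by
      rw [← hB₂, hf]
    ext x
    simpa [hρι'] using LinearMap.congr_fun h0 (ι x)
  have hBr : ∀ g, (∀ f, B f g = 0) → g = 0 := by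
    intro g hg
    have h0 : ι ∘ₗ g = 0 := freeTrace_nondeg_right s hs hnd _ fun f => by
      rw [LinearMap.comp_assoc, ← hB₁, hg]
    ext x
    simpa [hρι'] using congrArg ρ (LinearMap.congr_fun h0 x)
  have hN : Module.finrank k (V →ₗ[A] P₀) = Module.finrank k (P₀ →ₗ[A] V) := by
    have h := finrank_ker_add_finrank_of_flip_injective B
      ((injective_iff_map_eq_zero _).2 fun g hg => hBr g fun f => LinearMap.congr_fun hg f)
    have hker : LinearMap.ker B = ⊥ := LinearMap.ker_eq_bot.2 <|
      (injective_iff_map_eq_zero _).2 fun f hf => hBl f fun g => LinearMap.congr_fun hf g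
    rw [hker, finrank_bot, zero_add] at h
    exact h
  -- The embeddings of `Hom(U, V)` in `Hom(P₀, V)` and of `Hom(V, Ω U)` in `Hom(V, P₀)`.
  let jX : (U →ₗ[A] V) →ₗ[k] (P₀ →ₗ[A] V) :=
    { toFun := fun x => x ∘ₗ π
      map_add' := fun _ _ => LinearMap.add_comp _ _ _
      map_smul' := fun _ _ => LinearMap.smul_comp _ _ _ }
  let jY : (V →ₗ[A] ↥(LinearMap.ker π)) →ₗ[k] (V →ₗ[A] P₀) :=
    { toFun := fun y => (LinearMap.ker π).subtype ∘ₗ y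
      map_add' := fun _ _ => LinearMap.comp_add _ _ _
      map_smul' := fun _ _ => LinearMap.comp_smul _ _ _ }
  have hjX : Function.Injective jX := fun x x' h => (LinearMap.cancel_right hπ).1 h
  have hjY : Function.Injective jY := fun y y' h =>
    (LinearMap.cancel_left (Submodule.subtype_injective _)).1 h
  -- `B₁` and `B₂` restrict the pairing to `Y'` and to `X'`; their kernels are the orthogonals.
  let B₁ : (P₀ →ₗ[A] V) →ₗ[k] Y' →ₗ[k] k := B.compl₂ (jY ∘ₗ Y'.subtype)
  let B₂ : (V →ₗ[A] P₀) →ₗ[k] X' →ₗ[k] k := B.flip.compl₂ (jX ∘ₗ X'.subtype)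
  have hker₁ : LinearMap.ker B₁ = LinearMap.range jX := by
    apply le_antisymm
    · intro f hf
      have hf' : ∀ y ∈ Y', B f (jY y) = 0 := fun y hy => LinearMap.congr_fun hf ⟨y, hy⟩
      have h0 : f ∘ₗ (LinearMap.ker π).subtype ∘ₗ r = 0 :=
        freeTrace_nondeg_left s hs hnd _ fun w => by
          rw [← hB₂]
          exact hf' (r ∘ₗ w)
            (Submodule.subset_span ((factorsThroughProjective_iff r hr _).2 ⟨w, rfl⟩))
      have h1 : LinearMap.ker π ≤ LinearMap.ker f := by
        intro x hx
        obtain ⟨z, hz⟩ := hr ⟨x, hx⟩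
        simpa [hz] using LinearMap.congr_fun h0 z
      refine ⟨(LinearMap.ker π).liftQ f h1 ∘ₗ
        (π.quotKerEquivOfSurjective hπ).symm.toLinearMap, LinearMap.ext fun x => ?_⟩
      have : (π.quotKerEquivOfSurjective hπ).symm (π x) = Submodule.Quotient.mk x := by
        rw [LinearEquiv.symm_apply_eq]; rfl
      simp [jX, this]
    · rintro _ ⟨x, rfl⟩
      have hle : Y' ≤ LinearMap.ker (B (jX x) ∘ₗ jY) := by
        refine Submodule.span_le.2 fun y hy => ?_
        obtain ⟨w, rfl⟩ := (factorsThroughProjective_iff r hr _).1 hy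
        change B (jX x) (((LinearMap.ker π).subtype ∘ₗ r) ∘ₗ w) = 0
        rw [hB₂]
        have h0 : w ∘ₗ jX x ∘ₗ (LinearMap.ker π).subtype ∘ₗ r = 0 := by
          refine LinearMap.ext fun z => ?_
          simp [jX]
        rw [h0]
        simp [freeTrace]
      exact LinearMap.ext fun y => hle y.2
  have hker₂ : LinearMap.ker B₂ = LinearMap.range jY := by
    apply le_antisymm
    · intro g hg
      have hg' : ∀ x ∈ X', B (jX x) g = 0 := fun x hx => LinearMap.congr_fun hg ⟨x, hx⟩
      have h0 : π ∘ₗ g ∘ₗ q = 0 :=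
        freeTrace_nondeg_left s hs hnd _ fun h => by
          rw [← LinearMap.comp_assoc, ← hB₁]
          exact hg' (q ∘ₗ h)
            (Submodule.subset_span ((factorsThroughProjective_iff q hq _).2 ⟨h, rfl⟩))
      have h1 : ∀ v, g v ∈ LinearMap.ker π := by
        intro v
        obtain ⟨z, rfl⟩ := hq v
        exact LinearMap.congr_fun h0 z
      exact ⟨g.codRestrict _ h1, LinearMap.ext fun v => rfl⟩
    · rintro _ ⟨y, rfl⟩
      have hle : X' ≤ LinearMap.ker (B.flip (jY y) ∘ₗ jX) := by
        refine Submodule.span_le.2 fun x hx => ?_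
        obtain ⟨h, rfl⟩ := (factorsThroughProjective_iff q hq _).1 hx
        change B (q ∘ₗ h ∘ₗ π) (jY y) = 0
        rw [hB₁]
        have h0 : (h ∘ₗ π) ∘ₗ jY y ∘ₗ q = 0 := by
          refine LinearMap.ext fun z => ?_
          simp [jY]
        rw [h0]
        simp [freeTrace]
      exact LinearMap.ext fun x => hle x.2
  have hinj₁ : Function.Injective B₁.flip :=
    (injective_iff_map_eq_zero _).2 fun y hy => Subtype.ext <| hjY <|
      (hBr (jY y.1) fun f => LinearMap.congr_fun hy f).trans (map_zero jY).symm
  have hinj₂ : Function.Injective B₂.flip :=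
    (injective_iff_map_eq_zero _).2 fun x hx => Subtype.ext <| hjX <|
      (hBl (jX x.1) fun g => LinearMap.congr_fun hx g).trans (map_zero jX).symm
  have e₁ := finrank_ker_add_finrank_of_flip_injective (W := ↥Y') B₁ hinj₁
  have e₂ := finrank_ker_add_finrank_of_flip_injective B₂ hinj₂
  rw [hker₁, LinearMap.finrank_range_of_inj hjX] at e₁
  rw [hker₂, LinearMap.finrank_range_of_inj hjY] at e₂
  have e₃ := Submodule.finrank_quotient_add_finrank X'
  have e₄ := Submodule.finrank_quotient_add_finrank Y'
  omega
end

section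
/- Let (A,s) be a symmetric k-algebra, U and V finitely generated A-modules, and π : P₀ → U a surjective A-module homomorphism with P₀ finitely generated projective; set Ω(U) = ker(π). If ζ : V → Ω(U) is an A-module homomorphism that does not factor through a projective A-module, then there exists an A-module homomorphism η : U → V such that the composite ζ ∘ η : U → Ω(U) does not factor through a projective A-module. (This is the degree-zero instance of Lemma 8.1 of the paper: a nonzero element ζ of \hat{Ext}^{-1}_A(V,U) admits an element η of \hat{Ext}^{0}_A(U,V) with nonzero Yoneda product ζη in \hat{Ext}^{-1}_A(U,U).) -/
/-!
The proof is Tate duality made explicit. For `e : Aᵐ → Aᵐ` put `t(e) = ∑ i, s(e(eᵢ)ᵢ)`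
(`symTrace`). This form satisfies `t(fg) = t(gf)` (`symTrace_comm`), and
`(β, f) ↦ t(β ∘ f)` pairs `Hom_A(V, Aᵐ)` with `Hom_A(Aᵐ, V)` nondegenerately on the left
(`eq_zero_of_symTrace`), every `k`-linear functional on `Hom_A(Aᵐ, V)` being of the form
`t(β ∘ -)` (`exists_symTrace_eq`).

Write `P₀` as a summand of `Aᵐ`, with projection `q : Aᵐ → P₀` and section `j`, let
`κ : Ω(U) → Aᵐ` be the inclusion into `P₀` followed by `j`, and let `p : Aⁿ → Ω(U)` be
surjective. Suppose that `ζη` factors through a projective for every `η : U → V`. Then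
`ζη = pγ` for some `γ`, so `t(κζηπq) = t(γ(πqκ)p) = 0`, because `πqκ = 0`. Hence the functional
`f ↦ t(κζf)` on `Hom_A(Aᵐ, V)` vanishes on every `f` with `fκ = 0`, that is, on the kernel of
`f ↦ fκp`. It therefore has the form `f ↦ ψ(fκp)` with `ψ = t(β ∘ -)` for some `β : V → Aⁿ`,
and `t(κζf) = t(βfκp) = t(κpβf)` for all `f`. Nondegeneracy gives `κζ = κpβ`, so `ζ = pβ`
factors through `Aⁿ`, contrary to hypothesis.
-/

universe u v w

section SymmetricAlgebra

variable {k : Type*} [Field k] {A : Type*} [Ring A] [Algebra k A]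

/-- The trace form on `End_A(Aⁿ)` induced by a linear form `s` on `A`: the sum of the values of
`s` on the diagonal entries. -/
def symTrace (s : A →ₗ[k] k) {n : ℕ} (e : (Fin n → A) →ₗ[A] (Fin n → A)) : k :=
  ∑ i, s (e (Pi.single i 1) i)

lemma symTrace_comm (s : A →ₗ[k] k) (hs : ∀ a b : A, s (a * b) = s (b * a)) {m n : ℕ}
    (f : (Fin m → A) →ₗ[A] (Fin n → A)) (g : (Fin n → A) →ₗ[A] (Fin m → A)) :
    symTrace s (g.comp f) = symTrace s (f.comp g) := by
  have key : ∀ {m n : ℕ} (f : (Fin m → A) →ₗ[A] (Fin n → A))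
      (g : (Fin n → A) →ₗ[A] (Fin m → A)), symTrace s (g.comp f) =
        ∑ i, ∑ j, s (f (Pi.single i 1) j * g (Pi.single j 1) i) := by
    intro m n f g
    refine Finset.sum_congr rfl fun i _ => ?_
    rw [LinearMap.comp_apply, LinearMap.pi_apply_eq_sum_univ g (f (Pi.single i 1))]
    simp only [Finset.sum_apply, Pi.smul_apply, smul_eq_mul, map_sum]
    refine Finset.sum_congr rfl fun j _ => ?_
    have hsingle : (fun l => if j = l then (1 : A) else 0) = Pi.single j 1 := by
      ext l
      simp [Pi.single_apply, eq_comm]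
    rw [hsingle]
  rw [key, key, Finset.sum_comm]
  exact Finset.sum_congr rfl fun i _ => Finset.sum_congr rfl fun j _ => hs _ _

variable {V : Type*} [AddCommGroup V] [Module A V]

/-- The map `Aⁿ → V`, `x ↦ xᵢ v`. -/
def coordMap (n : ℕ) (i : Fin n) (v : V) : (Fin n → A) →ₗ[A] V :=
  (LinearMap.toSpanSingleton A V v).comp (LinearMap.proj i)

lemma coordMap_apply (n : ℕ) (i : Fin n) (v : V) (x : Fin n → A) :
    coordMap n i v x = x i • v := rfl

lemma eq_zero_of_symTrace (s : A →ₗ[k] k) (hs : ∀ a b : A, s (a * b) = s (b * a))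
    (hnd : ∀ a : A, (∀ b : A, s (a * b) = 0) → a = 0) {n : ℕ} (β : V →ₗ[A] (Fin n → A))
    (h : ∀ f : (Fin n → A) →ₗ[A] V, symTrace s (β.comp f) = 0) : β = 0 := by
  ext v i
  refine hnd _ fun b => ?_
  have := h (coordMap n i (b • v))
  rw [symTrace, Finset.sum_eq_single i] at this
  · simpa [coordMap_apply, hs] using this
  · intro j _ hj
    simp [coordMap_apply, hj.symm]
  · simp

/-- Half of the duality `Hom_A(V, A) ≅ Hom_k(V, k)`, `g ↦ s ∘ g`, namely surjectivity. -/
lemma exists_form_eq_s13 [FiniteDimensional k A] [Module k V] [IsScalarTower k A V]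
    (s : A →ₗ[k] k) (hs : ∀ a b : A, s (a * b) = s (b * a))
    (hnd : ∀ a : A, (∀ b : A, s (a * b) = 0) → a = 0) (l : V →ₗ[k] k) :
    ∃ g : V →ₗ[A] A, ∀ v, s (g v) = l v := by
  let Φ : A →ₗ[k] Module.Dual k A := (LinearMap.mul k A).compr₂ s
  have hΦ : ∀ a b, Φ a b = s (a * b) := fun _ _ => rfl
  have inj : Function.Injective Φ := by
    rw [injective_iff_map_eq_zero]
    intro a ha
    exact hnd a fun b => by rw [← hΦ, ha]; rfl
  have surj : Function.Surjective Φ :=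
    (LinearMap.injective_iff_surjective_of_finrank_eq_finrank
      (Subspace.dual_finrank_eq (K := k) (V := A)).symm).1 inj
  -- `g v` represents the functional `b ↦ l (b v)`; uniqueness makes `g` linear.
  have ex : ∀ v : V, ∃ a : A, ∀ b : A, s (a * b) = l (b • v) := by
    intro v
    obtain ⟨a, ha⟩ := surj (l.comp ((LinearMap.toSpanSingleton A V v).restrictScalars k))
    exact ⟨a, fun b => by rw [← hΦ, ha]; rfl⟩
  choose g hg using ex
  have uniq : ∀ a a' : A, (∀ b, s (a * b) = s (a' * b)) → a = a' := fun a a' h =>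
    sub_eq_zero.1 (hnd _ fun b => by rw [sub_mul, map_sub, h, sub_self])
  refine ⟨⟨⟨g, fun v w => uniq _ _ fun b => ?_⟩, fun c v => uniq _ _ fun b => ?_⟩, fun v => ?_⟩
  · rw [add_mul, map_add, hg, hg, hg, smul_add, map_add]
  · change s (g (c • v) * b) = s (c * g v * b)
    rw [mul_assoc, hs c, mul_assoc, hg, hg, mul_smul]
  · simpa using hg v 1

lemma exists_symTrace_eq [FiniteDimensional k A] [Module k V] [IsScalarTower k A V]
    [SMulCommClass A k V]
    (s : A →ₗ[k] k) (hs : ∀ a b : A, s (a * b) = s (b * a))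
    (hnd : ∀ a : A, (∀ b : A, s (a * b) = 0) → a = 0) {n : ℕ}
    (ψ : ((Fin n → A) →ₗ[A] V) →ₗ[k] k) :
    ∃ β : V →ₗ[A] (Fin n → A), ∀ f, symTrace s (β.comp f) = ψ f := by
  have ex : ∀ i : Fin n, ∃ g : V →ₗ[A] A, ∀ v, s (g v) = ψ (coordMap n i v) := by
    intro i
    let c : V →ₗ[k] ((Fin n → A) →ₗ[A] V) :=
      { toFun := coordMap n i
        map_add' := fun v w => LinearMap.ext fun x => by simp [coordMap_apply]
        map_smul' := fun c v => LinearMap.ext fun x => smul_comm (x i) c v }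
    exact exists_form_eq_s13 s hs hnd (ψ.comp c)
  choose g hg using ex
  refine ⟨LinearMap.pi g, fun f => ?_⟩
  have hf : f = ∑ i, coordMap n i (f (Pi.single i 1)) := by
    refine LinearMap.pi_ext' fun i => LinearMap.ext_ring ?_
    simp [coordMap_apply, Pi.single_apply]
  conv_rhs => rw [hf, map_sum]
  exact Finset.sum_congr rfl fun i _ => hg i _

end SymmetricAlgebra

lemma factorsThroughProjective_of_free (A : Type u) [Ring A] {U : Type v} {V : Type w}
    [AddCommGroup U] [Module A U] [AddCommGroup V] [Module A V] {n : ℕ}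
    (g : U →ₗ[A] (Fin n → A)) (h : (Fin n → A) →ₗ[A] V) :
    FactorsThroughProjective A (h.comp g) := by
  let e : ULift.{max u v w} (Fin n → A) ≃ₗ[A] (Fin n → A) := ULift.moduleEquiv
  refine ⟨ULift.{max u v w} (Fin n → A), inferInstance, inferInstance,
    Module.Projective.of_equiv e.symm, e.symm.toLinearMap.comp g, h.comp e.toLinearMap, ?_⟩
  ext x
  simp

/-- A map that factors through some projective lifts along every surjection onto its target. -/
lemma FactorsThroughProjective.exists_lift {A : Type u} [Ring A] {U : Type v} {V : Type w}
    [AddCommGroup U] [Module A U] [AddCommGroup V] [Module A V] {f : U →ₗ[A] V}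
    (hf : FactorsThroughProjective A f) {P : Type*} [AddCommGroup P] [Module A P]
    (p : P →ₗ[A] V) (hp : Function.Surjective p) : ∃ γ : U →ₗ[A] P, p.comp γ = f := by
  obtain ⟨Q, _, _, _, g, h, rfl⟩ := hf
  obtain ⟨h', rfl⟩ := Module.projective_lifting_property p h hp
  exact ⟨h'.comp g, rfl⟩

/-- For a symmetric `k`-algebra `(A,s)`, with `Ω(U) = ker π` for a
surjection `π : P₀ → U`, `P₀` finitely generated projective: if `ζ : V → Ω(U)` does not
factor through a projective module, then there is `η : U → V` such that `ζ ∘ η` does not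
factor through a projective module. -/
theorem exists_right_factor_nonprojective
    (k : Type*) [Field k] (A : Type*) [Ring A] [Algebra k A] [FiniteDimensional k A]
    (s : A →ₗ[k] k)
    (hs : ∀ a b : A, s (a * b) = s (b * a))
    (hnd : ∀ a : A, (∀ b : A, s (a * b) = 0) → a = 0)
    (U V : Type*) [AddCommGroup U] [Module A U] [Module.Finite A U]
    [AddCommGroup V] [Module A V] [Module.Finite A V]
    (P₀ : Type*) [AddCommGroup P₀] [Module A P₀]
    [Module.Finite A P₀] [Module.Projective A P₀]
    (π : P₀ →ₗ[A] U) (hπ : Function.Surjective π)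
    (ζ : V →ₗ[A] ↥(LinearMap.ker π))
    (hζ : ¬ FactorsThroughProjective A ζ) :
    ∃ η : U →ₗ[A] V, ¬ FactorsThroughProjective A (ζ.comp η) := by
  by_contra! hall
  refine hζ ?_
  let _ : Module k V := Module.compHom V (algebraMap k A)
  have : IsScalarTower k A V := ⟨fun c a v => by
    change (c • a) • v = algebraMap k A c • (a • v)
    rw [Algebra.smul_def, mul_smul]⟩
  have : SMulCommClass A k V := IsScalarTower.to_smulCommClass'
  have : IsNoetherianRing A := IsNoetherianRing.of_finite k A
  obtain ⟨m, q, hq⟩ := Module.Finite.exists_fin' A P₀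
  obtain ⟨j, hj⟩ := Module.projective_lifting_property q LinearMap.id hq
  obtain ⟨n, p, hp⟩ := Module.Finite.exists_fin' A (LinearMap.ker π)
  have hqj : ∀ x, q (j x) = x := fun x => LinearMap.congr_fun hj x
  let κ : LinearMap.ker π →ₗ[A] (Fin m → A) := j.comp (LinearMap.ker π).subtype
  have hκ : Function.Injective κ := fun x y h => by
    have := congrArg q h
    simpa [κ, hqj] using this
  have hη : ∀ η : U →ₗ[A] V,
      symTrace s ((κ.comp ζ).comp ((η.comp π).comp q)) = 0 := by
    intro η
    obtain ⟨γ, hγ⟩ := (hall η).exists_lift p hp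
    have h1 : (κ.comp ζ).comp ((η.comp π).comp q) = (κ.comp p).comp ((γ.comp π).comp q) := by
      refine LinearMap.ext fun x => ?_
      exact congrArg κ (LinearMap.congr_fun hγ (π (q x))).symm
    have h2 : ((γ.comp π).comp q).comp (κ.comp p) = 0 := by
      refine LinearMap.ext fun x => ?_
      simp [κ, hqj]
    rw [h1, symTrace_comm s hs, h2]
    simp [symTrace]
  let φ : ((Fin m → A) →ₗ[A] V) →ₗ[k] k :=
    { toFun := fun f => symTrace s ((κ.comp ζ).comp f)
      map_add' := fun f g => by simp [symTrace, Finset.sum_add_distrib]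
      map_smul' := fun c f => by
        simp only [symTrace, LinearMap.comp_apply, LinearMap.smul_apply, RingHom.id_apply,
          Finset.smul_sum]
        refine Finset.sum_congr rfl fun i _ => ?_
        rw [← algebraMap_smul A c (f _), map_smul, map_smul, algebraMap_smul, Pi.smul_apply,
          map_smul] }
  let F : ((Fin m → A) →ₗ[A] V) →ₗ[k] ((Fin n → A) →ₗ[A] V) :=
    { toFun := fun f => f.comp (κ.comp p)
      map_add' := fun f g => rfl
      map_smul' := fun c f => rfl }
  have hφ : φ ∈ LinearMap.range F.dualMap := by
    rw [LinearMap.range_dualMap_eq_dualAnnihilator_ker, Submodule.mem_dualAnnihilator]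
    intro f hf
    have hf0 : ∀ x : LinearMap.ker π, f (j x) = 0 := by
      intro x
      obtain ⟨y, rfl⟩ := hp x
      exact LinearMap.congr_fun hf y
    -- `f ∘ j` vanishes on `ker π`, hence descends along `π`.
    obtain ⟨η, hη'⟩ : ∃ η : U →ₗ[A] V, η.comp π = f.comp j := by
      have hle : LinearMap.ker π ≤ LinearMap.ker (f.comp j) := fun x hx => hf0 ⟨x, hx⟩
      refine ⟨((LinearMap.ker π).liftQ (f.comp j) hle).comp
        (π.quotKerEquivOfSurjective hπ).symm.toLinearMap, ?_⟩
      ext x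
      have : (π.quotKerEquivOfSurjective hπ).symm (π x) = (LinearMap.ker π).mkQ x := by
        rw [LinearEquiv.symm_apply_eq]; rfl
      simp [this]
    have h0 := hη η
    rw [hη'] at h0
    have e1 : (κ.comp ζ).comp ((f.comp j).comp q) = ((κ.comp ζ).comp f).comp (j.comp q) := rfl
    have e2 : (j.comp q).comp ((κ.comp ζ).comp f) = (κ.comp ζ).comp f := by
      refine LinearMap.ext fun x => ?_
      simp [κ, hqj]
    rw [e1, symTrace_comm s hs, e2] at h0
    exact h0
  obtain ⟨ψ, hψ⟩ := hφ
  obtain ⟨β, hβ⟩ := exists_symTrace_eq s hs hnd ψ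
  have hzero : κ.comp ζ - (κ.comp p).comp β = 0 := by
    refine eq_zero_of_symTrace s hs hnd _ fun f => ?_
    have h1 : symTrace s ((κ.comp ζ).comp f) = ψ (f.comp (κ.comp p)) :=
      (LinearMap.congr_fun hψ f).symm
    have h2 : symTrace s ((κ.comp p).comp (β.comp f)) = ψ (f.comp (κ.comp p)) := by
      rw [symTrace_comm s hs, ← hβ]; rfl
    have h3 : symTrace s ((κ.comp ζ - (κ.comp p).comp β).comp f) =
        symTrace s ((κ.comp ζ).comp f) - symTrace s ((κ.comp p).comp (β.comp f)) := by
      simp [symTrace, Finset.sum_sub_distrib]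
    rw [h3, h1, h2, sub_self]
  have hfac : p.comp β = ζ := by
    refine LinearMap.ext fun v => hκ ?_
    exact (LinearMap.congr_fun (sub_eq_zero.1 hzero) v).symm
  rw [← hfac]
  exact factorsThroughProjective_of_free A β p
end
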